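/- Fix ρ ∈ (0,1) and α ∈ (0,1). Let (α_n) be a sequence in (0,1) with n·α_n → α as n → ∞, let c_n be defined by Φ(−c_n) = α_n, and set FWER_n(ρ) = 1 − H_n(ρ, c_n). Then limsup_{n→∞} [ FWER_n(ρ) − ( α_n + (1−ρ)(1 − α_n − (1−α_n)^n) ) ] ≤ 0. -/

import Mathlib

open MeasureTheory Filter

/-- The standard normal density. -/
noncomputable def phi (x : ℝ) : ℝ := (Real.sqrt (2 * Real.pi))⁻¹ * Real.exp (-x ^ 2 / 2)

/-- The standard normal cumulative distribution function. -/
noncomputable def Phi (x : ℝ) : ℝ := ∫ t in Set.Iic x, phi t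

/-- d(ρ,c,z) = (c + √ρ·z)/√(1−ρ). -/
noncomputable def dd (ρ c z : ℝ) : ℝ := (c + Real.sqrt ρ * z) / Real.sqrt (1 - ρ)

/-- G(ρ,c,z) = (c + z/√ρ)/(2(1−ρ)^{3/2}). -/
noncomputable def G (ρ c z : ℝ) : ℝ :=
  (c + z / Real.sqrt ρ) / (2 * (1 - ρ) ^ ((3 : ℝ) / 2))

/-- H_n(ρ,c) = ∫ Φ(d(ρ,c,z))^n φ(z) dz. -/
noncomputable def Hn (n : ℕ) (ρ c : ℝ) : ℝ := ∫ z : ℝ, (Phi (dd ρ c z)) ^ n * phi z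

lemma phi_eq_gauss : phi = ProbabilityTheory.gaussianPDFReal 0 1 := by
  funext x
  simp [phi, ProbabilityTheory.gaussianPDFReal]

lemma phi_pos (x : ℝ) : 0 < phi x := by
  unfold phi; positivity

lemma phi_integrable : Integrable phi := by
  rw [phi_eq_gauss]; exact ProbabilityTheory.integrable_gaussianPDFReal 0 1

lemma phi_integral : ∫ x, phi x = 1 := by
  rw [phi_eq_gauss]; exact ProbabilityTheory.integral_gaussianPDFReal_eq_one 0 one_ne_zero

lemma phi_neg (x : ℝ) : phi (-x) = phi x := by simp [phi]

lemma Phi_mono : Monotone Phi := by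
  intro a b hab
  exact setIntegral_mono_set phi_integrable.integrableOn
    (Eventually.of_forall fun x => (phi_pos x).le)
    (HasSubset.Subset.eventuallyLE (Set.Iic_subset_Iic.2 hab))

lemma Phi_pos (x : ℝ) : 0 < Phi x := by
  unfold Phi
  rw [setIntegral_pos_iff_support_of_nonneg_ae (Eventually.of_forall fun x => (phi_pos x).le)
    phi_integrable.integrableOn]
  have : Function.support phi = Set.univ := by
    ext y; simp [(phi_pos y).ne']
  simp [this]

lemma Phi_add_neg (x : ℝ) : Phi x + Phi (-x) = 1 := by
  have h := integral_comp_neg_Ioi x phi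
  simp only [phi_neg] at h
  unfold Phi
  rw [← h, ← phi_integral]
  exact intervalIntegral.integral_Iic_add_Ioi phi_integrable.integrableOn
    phi_integrable.integrableOn

lemma Phi_le_one (x : ℝ) : Phi x ≤ 1 := by
  have := Phi_add_neg x
  have := Phi_pos (-x)
  linarith

lemma Phi_shift (c t : ℝ) (ht : 0 ≤ t) :
    Phi (-(c + t)) ≤ Real.exp (-(c * t)) * Phi (-c) := by
  have h1 : Phi (-(c + t)) = ∫ x in Set.Iic (-c), phi (x - t) := by
    unfold Phi
    rw [← integral_indicator measurableSet_Iic, ← integral_indicator measurableSet_Iic,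
      ← integral_sub_right_eq_self _ t]
    congr 1
    funext x
    by_cases hx : x ≤ -c
    · rw [Set.indicator_of_mem (by simp; linarith), Set.indicator_of_mem (by simpa using hx)]
    · rw [Set.indicator_of_notMem (by simp; linarith), Set.indicator_of_notMem (by simpa using hx)]
  rw [h1]
  unfold Phi
  rw [← integral_const_mul]
  apply setIntegral_mono_on
  · exact (phi_integrable.comp_sub_right t).integrableOn
  · exact (phi_integrable.const_mul _).integrableOn
  · exact measurableSet_Iic
  · intro x hx
    have hx : x ≤ -c := hx
    unfold phi
    rw [mul_left_comm, ← Real.exp_add]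
    gcongr
    nlinarith [mul_nonneg ht (sub_nonneg.2 hx), sq_nonneg t]

lemma Hn_tendsto (ρ : ℝ) (hρ : ρ ∈ Set.Ioo (0:ℝ) 1) (α : ℝ)
    (a : ℕ → ℝ) (hlim : Tendsto (fun n : ℕ => (n : ℝ) * a n) atTop (nhds α))
    (c : ℕ → ℝ) (hc : ∀ n, Phi (-(c n)) = a n) (hct : Tendsto c atTop atTop) :
    Tendsto (fun n => Hn n ρ (c n)) atTop (nhds 1) := by
  rw [← phi_integral]
  unfold Hn
  refine tendsto_integral_of_dominated_convergence phi ?_ phi_integrable ?_ ?_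
  · intro n
    have : Measurable fun z => dd ρ (c n) z := by unfold dd; fun_prop
    exact (((Phi_mono.measurable.comp this).pow_const n).aestronglyMeasurable).mul
      phi_integrable.aestronglyMeasurable
  · intro n
    refine Eventually.of_forall fun z => ?_
    rw [Real.norm_of_nonneg (mul_nonneg (pow_nonneg (Phi_pos _).le _) (phi_pos _).le)]
    exact mul_le_of_le_one_left (phi_pos _).le (pow_le_one₀ (Phi_pos _).le (Phi_le_one _))
  · refine Eventually.of_forall fun z => ?_
    suffices h : Tendsto (fun n => Phi (dd ρ (c n) z) ^ n) atTop (nhds 1) by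
      simpa using h.mul_const (phi z)
    have hlow : Tendsto (fun n : ℕ => 1 - Real.exp (-(c n)) * (n * a n)) atTop (nhds 1) := by
      have := ((Real.tendsto_exp_neg_atTop_nhds_zero.comp hct).mul hlim).const_sub 1
      simpa using this
    refine tendsto_of_tendsto_of_tendsto_of_le_of_le' hlow tendsto_const_nhds ?_
      (Eventually.of_forall fun n => pow_le_one₀ (Phi_pos _).le (Phi_le_one _))
    have hs0 : 0 < Real.sqrt (1 - ρ) := Real.sqrt_pos.2 (by linarith [hρ.2])
    have hs1 : Real.sqrt (1 - ρ) < 1 := by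
      rw [Real.sqrt_lt' one_pos]; linarith [hρ.1]
    set s := Real.sqrt (1 - ρ) with hs
    filter_upwards [hct.eventually_ge_atTop 0,
      hct.eventually_ge_atTop ((s - Real.sqrt ρ * z) / (1 - s))] with n h0 h1
    rw [div_le_iff₀ (by linarith)] at h1
    have hd : c n + 1 ≤ dd ρ (c n) z := by
      unfold dd
      rw [← hs, le_div_iff₀ hs0]
      linarith
    have h2 : Phi (-(dd ρ (c n) z)) ≤ Real.exp (-(c n)) * a n := by
      refine (Phi_mono (neg_le_neg hd)).trans ?_
      have := Phi_shift (c n) 1 zero_le_one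
      rwa [mul_one, hc] at this
    have h3 := Phi_add_neg (dd ρ (c n) z)
    have h4 := one_add_mul_le_pow (a := -Phi (-(dd ρ (c n) z)))
      (by linarith [Phi_le_one (-(dd ρ (c n) z))]) n
    have h5 : Phi (dd ρ (c n) z) = 1 + -Phi (-(dd ρ (c n) z)) := by linarith
    rw [h5]
    refine le_trans ?_ h4
    have := mul_le_mul_of_nonneg_left h2 (Nat.cast_nonneg (α := ℝ) n)
    linarith

theorem limsup_FWER_minus_line_nonpos
    (ρ : ℝ) (hρ : ρ ∈ Set.Ioo (0:ℝ) 1) (α : ℝ) (hα : α ∈ Set.Ioo (0:ℝ) 1)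
    (αseq : ℕ → ℝ) (hαseq : ∀ n, αseq n ∈ Set.Ioo (0:ℝ) 1)
    (hlim : Tendsto (fun n : ℕ => (n : ℝ) * αseq n) atTop (nhds α))
    (c : ℕ → ℝ) (hc : ∀ n, Phi (-(c n)) = αseq n) :
    limsup (fun n : ℕ =>
        (1 - Hn n ρ (c n)) - (αseq n + (1 - ρ) * (1 - αseq n - (1 - αseq n) ^ n)))
      atTop ≤ 0 := by
  have ha : Tendsto αseq atTop (nhds 0) := by
    have h := hlim.mul (tendsto_inv_atTop_nhds_zero_nat (𝕜 := ℝ))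
    rw [mul_zero] at h
    refine h.congr' ?_
    filter_upwards [eventually_gt_atTop 0] with n hn
    have : (n : ℝ) ≠ 0 := by positivity
    field_simp
  have hct : Tendsto c atTop atTop := by
    refine tendsto_atTop.2 fun M => ?_
    filter_upwards [ha.eventually_lt_const (Phi_pos (-M))] with n hn
    by_contra hlt
    rw [← hc] at hn
    have := Phi_mono (show -M ≤ -(c n) by linarith)
    linarith
  have hH := Hn_tendsto ρ hρ α αseq hlim c hc hct
  have hp : Tendsto (fun n : ℕ => (1 - αseq n) ^ n) atTop (nhds (Real.exp (-α))) := by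
    have := Real.tendsto_one_add_pow_exp_of_tendsto (g := fun n => -αseq n) (t := -α)
      (by simpa using hlim.neg)
    simpa [sub_eq_add_neg] using this
  have hu := (hH.const_sub 1).sub (ha.add (((ha.const_sub 1).sub hp).const_mul (1 - ρ)))
  rw [hu.limsup_eq]
  have : Real.exp (-α) ≤ 1 := Real.exp_le_one_iff.2 (by linarith [hα.1])
  nlinarith [mul_nonneg (sub_nonneg.2 hρ.2.le) (sub_nonneg.2 this)]
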